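/- Let G be a finitely generated group with bVCyc. Then the abelianization G/[G,G] of G is virtually cyclic (equivalently, it is a finitely generated abelian group of rank at most one). -/

import Mathlib

/-!
The property bVCyc passes to quotients. Conjugation is trivial in an abelian quotient, so there the
witnessing virtually cyclic subgroups cover the whole group, and by B. H. Neumann's lemma one of
them has finite index.
-/

/-- A group is *virtually cyclic* if it has a cyclic subgroup of finite index. -/
def VirtuallyCyclic (G : Type*) [Group G] : Prop :=
  ∃ H : Subgroup G, IsCyclic H ∧ H.FiniteIndex

/-- A group has *bVCyc* if there are finitely many virtually cyclic subgroups such that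
every element lies in a conjugate of one of them. -/
def bVCyc (G : Type*) [Group G] : Prop :=
  ∃ 𝒱 : Finset (Subgroup G), (∀ V ∈ 𝒱, VirtuallyCyclic V) ∧
    ∀ g : G, ∃ V ∈ 𝒱, ∃ x : G, x * g * x⁻¹ ∈ V

/-- A group has *BVC* if there are finitely many virtually cyclic subgroups such that
every virtually cyclic subgroup is contained in a conjugate of one of them. -/
def BVC (G : Type*) [Group G] : Prop :=
  ∃ 𝒱 : Finset (Subgroup G), (∀ V ∈ 𝒱, VirtuallyCyclic V) ∧
    ∀ W : Subgroup G, VirtuallyCyclic W →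
      ∃ V ∈ 𝒱, ∃ x : G, ∀ w ∈ W, x * w * x⁻¹ ∈ V

/-- A group has *bCyc* if there are finitely many elements g₁, …, gₙ such that every
element is conjugate to a power of some gᵢ. -/
def bCyc (G : Type*) [Group G] : Prop :=
  ∃ s : Finset G, ∀ g : G, ∃ a ∈ s, ∃ k : ℤ, IsConj g (a ^ k)

/-- An element is *primitive* if it cannot be written as a proper power. -/
def Primitive {G : Type*} [Group G] (g : G) : Prop :=
  ∀ (h : G) (n : ℤ), g = h ^ n → n = 1 ∨ n = -1

section

variable {G H : Type*} [Group G] [Group H]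

theorem VirtuallyCyclic.of_surjective (f : G →* H) (hf : Function.Surjective f)
    (hG : VirtuallyCyclic G) : VirtuallyCyclic H := by
  obtain ⟨C, hcyclic, hfinite⟩ := hG
  have index_dvd : (C.map f).index ∣ C.index := C.index_map_dvd hf
  exact ⟨C.map f, isCyclic_of_surjective (f.subgroupMap C) (f.subgroupMap_surjective C),
    ⟨ne_zero_of_dvd_ne_zero hfinite.index_ne_zero index_dvd⟩⟩

theorem VirtuallyCyclic.of_finiteIndex {V : Subgroup G} (hV : VirtuallyCyclic V)
    (hfinite : V.FiniteIndex) : VirtuallyCyclic G := by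
  obtain ⟨C, hcyclic, hC⟩ := hV
  refine ⟨C.map V.subtype,
    isCyclic_of_surjective (V.subtype.subgroupMap C) (V.subtype.subgroupMap_surjective C), ⟨?_⟩⟩
  rw [Subgroup.index_map_subtype]
  exact mul_ne_zero hC.index_ne_zero hfinite.index_ne_zero

theorem bVCyc.of_surjective (f : G →* H) (hf : Function.Surjective f) (hG : bVCyc G) :
    bVCyc H := by
  classical
  obtain ⟨𝒱, hcyclic, hcover⟩ := hG
  refine ⟨𝒱.image (Subgroup.map f), Finset.forall_mem_image.2 fun V hV ↦
    (hcyclic V hV).of_surjective (f.subgroupMap V) (f.subgroupMap_surjective V), fun h ↦ ?_⟩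
  obtain ⟨g, rfl⟩ := hf h
  obtain ⟨V, hV, x, hx⟩ := hcover g
  refine ⟨V.map f, Finset.mem_image_of_mem _ hV, f x, ?_⟩
  simpa only [map_mul, map_inv] using Subgroup.mem_map_of_mem f hx

open scoped Pointwise in
theorem exists_finiteIndex_of_subgroup_cover {s : Finset (Subgroup G)}
    (hcover : ∀ g : G, ∃ V ∈ s, g ∈ V) : ∃ V ∈ s, V.FiniteIndex := by
  have coset_cover : ⋃ V ∈ s, (1 : G) • (V : Set G) = Set.univ :=
    Set.eq_univ_of_forall fun g ↦ by
      simpa only [one_smul, Set.mem_iUnion, SetLike.mem_coe, exists_prop] using hcover g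
  exact Subgroup.exists_finiteIndex_of_leftCoset_cover coset_cover

end

theorem bVCyc.virtuallyCyclic {A : Type*} [CommGroup A] (hA : bVCyc A) : VirtuallyCyclic A := by
  obtain ⟨𝒱, hcyclic, hconj⟩ := hA
  have hcover (a : A) : ∃ V ∈ 𝒱, a ∈ V := by
    simpa only [mul_inv_cancel_comm, exists_const] using hconj a
  obtain ⟨V, hV, hfinite⟩ := exists_finiteIndex_of_subgroup_cover hcover
  exact (hcyclic V hV).of_finiteIndex hfinite

theorem stmt_3_general {G : Type*} [Group G] (h : bVCyc G) :
    VirtuallyCyclic (Abelianization G) :=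
  (h.of_surjective Abelianization.of QuotientGroup.mk_surjective).virtuallyCyclic

/-- The abelianization of a finitely generated group with bVCyc is virtually cyclic. -/
theorem stmt_3 {G : Type*} [Group G] (hfg : Group.FG G) (h : bVCyc G) :
    VirtuallyCyclic (Abelianization G) :=
  stmt_3_general h
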